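/- arXiv:1912.07707 — 3 statements merged into one kernel-verified Lean document; each statement's English description precedes it below -/
import Mathlib

section
/- Let ψ : ℝ³ → ℝ be continuous with ψ ≥ 0, let u : ℝ³ → ℝ be continuous, and let w ∈ C²(ℝ³) satisfy Δw = 3 ψ u² w on all of ℝ³. Suppose there exists a constant C > 0 such that |w(x)| ≤ C/|x| for all |x| ≥ 1. Then w ≡ 0 on ℝ³. -/
/-- Partial derivative in the `i`-th coordinate direction. -/
noncomputable def pderiv' {d : ℕ} (i : Fin d) (f : EuclideanSpace ℝ (Fin d) → ℝ) :
    EuclideanSpace ℝ (Fin d) → ℝ :=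
  fun x => fderiv ℝ f x (EuclideanSpace.single i 1)

/-- The Laplacian `Δf = Σ_i ∂_i ∂_i f`. -/
noncomputable def lap {d : ℕ} (f : EuclideanSpace ℝ (Fin d) → ℝ) :
    EuclideanSpace ℝ (Fin d) → ℝ :=
  fun x => ∑ i : Fin d, pderiv' i (pderiv' i f) x

lemma aux_second {g g' : ℝ → ℝ} {c : ℝ} (hg : ∀ t, HasDerivAt g (g' t) t)
    (hg' : HasDerivAt g' c 0) (hm : IsLocalMax g 0) : c ≤ 0 := by
  by_contra hc
  push Not at hc
  have hd : deriv g = g' := funext fun t => (hg t).deriv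
  have h0 : deriv g 0 = 0 := hm.deriv_eq_zero
  have hmin : IsLocalMin g 0 :=
    isLocalMin_of_deriv_deriv_pos (by rw [hd, hg'.deriv]; exact hc) h0 (hg 0).continuousAt
  have hconst : g =ᶠ[nhds 0] fun _ => g 0 := by
    filter_upwards [hm, hmin] with t h1 h2
    exact le_antisymm h1 h2
  have h2 : deriv g =ᶠ[nhds 0] fun _ => 0 := by
    have := hconst.deriv
    simpa using this
  have h3 := h2.deriv_eq
  rw [hd, hg'.deriv] at h3
  simp at h3
  linarith

lemma aux_pos (w : EuclideanSpace ℝ (Fin 3) → ℝ) (hw : ContDiff ℝ 2 w)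
    (hlap : ∀ x, 0 < w x → 0 ≤ lap w x) (C : ℝ) (hC : 0 < C)
    (hdecay : ∀ x : EuclideanSpace ℝ (Fin 3), 1 ≤ ‖x‖ → |w x| ≤ C / ‖x‖) :
    ∀ x, w x ≤ 0 := by
  intro x0
  by_contra hx0
  push Not at hx0
  obtain ⟨R, hR1, hR2, hR3⟩ : ∃ R : ℝ, 1 ≤ R ∧ ‖x0‖ ≤ R ∧ C / R < w x0 / 2 := by
    refine ⟨1 + ‖x0‖ + 2 * C / w x0, ?_, ?_, ?_⟩
    · have : 0 ≤ 2 * C / w x0 := by positivity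
      linarith [norm_nonneg x0]
    · have : 0 ≤ 2 * C / w x0 := by positivity
      linarith
    · rw [div_lt_iff₀ (by positivity)]
      have : w x0 / 2 * (2 * C / w x0) = C := by field_simp
      have h2 : 0 < w x0 / 2 * (1 + ‖x0‖) := by positivity
      linarith [mul_add (w x0 / 2) (1 + ‖x0‖) (2 * C / w x0)]
  obtain ⟨ε, hε, hεR⟩ : ∃ ε : ℝ, 0 < ε ∧ ε * R ^ 2 < w x0 / 2 := by
    refine ⟨w x0 / (4 * R ^ 2), by positivity, ?_⟩
    have : w x0 / (4 * R ^ 2) * R ^ 2 = w x0 / 4 := by field_simp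
    linarith
  have hcont : Continuous fun x : EuclideanSpace ℝ (Fin 3) => w x + ε * ‖x‖ ^ 2 := by
    have := hw.continuous
    fun_prop
  obtain ⟨y, hy, hmax⟩ := (isCompact_closedBall (0 : EuclideanSpace ℝ (Fin 3)) R).exists_isMaxOn
    ⟨x0, by simpa using hR2⟩ hcont.continuousOn
  have hyx : w x0 + ε * ‖x0‖ ^ 2 ≤ w y + ε * ‖y‖ ^ 2 := hmax (by simpa using hR2)
  have hyR : ‖y‖ ≤ R := by simpa using hy
  have hp : 0 ≤ ε * ‖x0‖ ^ 2 := by positivity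
  have hle : ε * ‖y‖ ^ 2 ≤ ε * R ^ 2 := by gcongr
  have hwy : 0 < w y := by linarith
  have hlt : ‖y‖ < R := by
    rcases hyR.lt_or_eq with h | h
    · exact h
    · exfalso
      have := hdecay y (by rw [h]; exact hR1)
      rw [h] at this
      linarith [le_abs_self (w y)]
  have hloc : IsLocalMax (fun x : EuclideanSpace ℝ (Fin 3) => w x + ε * ‖x‖ ^ 2) y :=
    hmax.isLocalMax (Metric.closedBall_mem_nhds_of_mem (by simpa using hlt))
  have key : ∀ i : Fin 3, pderiv' i (pderiv' i w) y + 2 * ε ≤ 0 := by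
    intro i
    set e : EuclideanSpace ℝ (Fin 3) := EuclideanSpace.single i 1 with he
    have hl : ∀ t : ℝ, HasDerivAt (fun t : ℝ => y + t • e) e t := by
      intro t
      simpa using ((hasDerivAt_id t).smul_const e).const_add y
    have hdw : Differentiable ℝ w := hw.differentiable (by norm_num)
    have hdp : Differentiable ℝ (pderiv' i w) := by
      have h1 : ContDiff ℝ 1 (fderiv ℝ w) := hw.fderiv_right (by norm_num)
      exact (h1.clm_apply contDiff_const).differentiable (by norm_num)
    have hn : ∀ t : ℝ, ‖y + t • e‖ ^ 2 = ‖y‖ ^ 2 + 2 * y i * t + t ^ 2 := by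
      intro t
      rw [norm_add_sq_real, inner_smul_right, norm_smul, he]
      simp [EuclideanSpace.inner_single_right]
      ring
    refine aux_second (g := fun t => w (y + t • e) + ε * (‖y‖ ^ 2 + 2 * y i * t + t ^ 2))
      (g' := fun t => pderiv' i w (y + t • e) + ε * (2 * y i + 2 * t)) ?_ ?_ ?_
    · intro t
      have h1 := (hdw (y + t • e)).hasFDerivAt.comp_hasDerivAt t (hl t)
      have h2 : HasDerivAt (fun t : ℝ => ‖y‖ ^ 2 + 2 * y i * t + t ^ 2) (2 * y i + 2 * t) t := by
        have := (((hasDerivAt_id t).const_mul (2 * y i)).const_add (‖y‖ ^ 2)).add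
          ((hasDerivAt_id t).pow 2)
        have hv : 2 * y i * 1 + ((2 : ℕ) : ℝ) * id t ^ (2 - 1) * 1 = 2 * y i + 2 * t := by simp
        rw [hv] at this
        exact this
      exact h1.add (h2.const_mul ε)
    · have h1 := (hdp (y + (0 : ℝ) • e)).hasFDerivAt.comp_hasDerivAt 0 (hl 0)
      have h2 : HasDerivAt (fun t : ℝ => 2 * y i + 2 * t) 2 0 := by
        simpa using ((hasDerivAt_id (0 : ℝ)).const_mul 2).const_add (2 * y i)
      have h3 := h1.add (h2.const_mul ε)
      rw [zero_smul, add_zero, mul_comm ε 2] at h3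
      exact h3
    · have hc : ContinuousAt (fun t : ℝ => y + t • e) 0 := (hl 0).continuousAt
      have ht : Filter.Tendsto (fun t : ℝ => y + t • e) (nhds 0) (nhds y) := by
        simpa [ContinuousAt] using hc
      filter_upwards [ht.eventually hloc] with t h
      rw [hn] at h
      simpa using h
  have h1 := hlap y hwy
  have h2 : lap w y = ∑ i : Fin 3, pderiv' i (pderiv' i w) y := rfl
  rw [Fin.sum_univ_three] at h2
  linarith [key 0, key 1, key 2]

/-- A `C²` solution of `Δw = 3 ψ u² w` on `ℝ³` with `ψ ≥ 0` that decays like `C/|x|`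
at infinity vanishes identically. -/
theorem stmt12 (ψ u : EuclideanSpace ℝ (Fin 3) → ℝ)
    (hψc : Continuous ψ) (hψ0 : ∀ x, 0 ≤ ψ x) (hu : Continuous u)
    (w : EuclideanSpace ℝ (Fin 3) → ℝ) (hw : ContDiff ℝ 2 w)
    (heq : ∀ x, lap w x = 3 * ψ x * (u x) ^ 2 * w x)
    (C : ℝ) (hC : 0 < C)
    (hdecay : ∀ x : EuclideanSpace ℝ (Fin 3), 1 ≤ ‖x‖ → |w x| ≤ C / ‖x‖) :
    ∀ x, w x = 0 := by
  have hlapneg : ∀ x, lap (fun x => -w x) x = -lap w x := by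
    intro x
    have h : ∀ (i : Fin 3) (f : EuclideanSpace ℝ (Fin 3) → ℝ),
        pderiv' i (fun x => -f x) = fun x => -pderiv' i f x := by
      intro i f
      funext x
      simp [pderiv', fderiv_fun_neg]
    simp only [lap, h, Finset.sum_neg_distrib]
  have hk : ∀ x, 0 ≤ 3 * ψ x * (u x) ^ 2 := fun x => by
    have := hψ0 x
    positivity
  intro x
  have h1 := aux_pos w hw (fun x hx => by
    rw [heq]; exact mul_nonneg (hk x) hx.le) C hC hdecay x
  have h2 := aux_pos (fun x => -w x) hw.neg (fun x hx => by
    rw [hlapneg, heq, ← mul_neg]; exact mul_nonneg (hk x) hx.le) C hC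
    (fun x hx => by simpa using hdecay x hx) x
  linarith
end

section
/- Let ψ, φ : ℝ³ → ℝ be continuous with ψ ≥ 0. Suppose u₁, u₂ ∈ C²(ℝ³) both satisfy the semilinear elliptic equation Δu = ψ u³ − φ on ℝ³, and suppose there exists a constant C > 0 such that |u₁(x)| ≤ C/|x| and |u₂(x)| ≤ C/|x| for all |x| ≥ 1. Then u₁ = u₂ on ℝ³. -/
theorem one_dim_aux (g g' : ℝ → ℝ) (a : ℝ) (hg : ∀ t, HasDerivAt g (g' t) t)
    (hg' : HasDerivAt g' a 0) (hmax : IsLocalMax g 0) : a ≤ 0 := by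
  by_contra h
  push Not at h
  have e : deriv g = g' := funext fun t => (hg t).deriv
  have h0 : deriv g 0 = 0 := hmax.deriv_eq_zero
  have hmin : IsLocalMin g 0 := by
    apply isLocalMin_of_deriv_deriv_pos _ h0 (hg 0).continuousAt
    rw [e, hg'.deriv]; exact h
  have hc : g =ᶠ[nhds 0] fun _ => g 0 := by
    filter_upwards [hmax, hmin] with t h1 h2
    exact le_antisymm h1 h2
  have h1 : deriv g =ᶠ[nhds 0] deriv (fun _ : ℝ => g 0) := hc.deriv
  have h2 := h1.deriv_eq
  rw [e, hg'.deriv] at h2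
  simp at h2
  exact h.ne' h2

theorem pderiv_aux {d : ℕ} (i : Fin d) (f : EuclideanSpace ℝ (Fin d) → ℝ)
    (hf : Differentiable ℝ f) (y : EuclideanSpace ℝ (Fin d)) (t : ℝ) :
    HasDerivAt (fun s : ℝ => f (y + s • EuclideanSpace.single i (1:ℝ)))
      (pderiv' i f (y + t • EuclideanSpace.single i (1:ℝ))) t := by
  have h1 : HasDerivAt (fun s : ℝ => y + s • EuclideanSpace.single i (1:ℝ))
      (EuclideanSpace.single i (1:ℝ)) t := by
    simpa using ((hasDerivAt_id t).smul_const (EuclideanSpace.single i (1:ℝ))).const_add y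
  exact (hf _).hasFDerivAt.comp_hasDerivAt t h1

theorem pderiv_contDiff {d : ℕ} (i : Fin d) (f : EuclideanSpace ℝ (Fin d) → ℝ)
    (hf : ContDiff ℝ 2 f) : Differentiable ℝ (pderiv' i f) := by
  have h : ContDiff ℝ 1 (fderiv ℝ f) := hf.fderiv_right (by norm_num)
  exact ((h.differentiable (by norm_num)).clm_apply (differentiable_const _))

theorem max_aux {d : ℕ} (i : Fin d) (w : EuclideanSpace ℝ (Fin d) → ℝ)
    (hw : ContDiff ℝ 2 w) (ε : ℝ) (y : EuclideanSpace ℝ (Fin d))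
    (hmax : IsLocalMax (fun x => w x + ε * ‖x‖ ^ 2) y) :
    pderiv' i (pderiv' i w) y + 2 * ε ≤ 0 := by
  have hn : ∀ s : ℝ, ‖y + s • EuclideanSpace.single i (1:ℝ)‖ ^ 2
      = ‖y‖ ^ 2 + 2 * s * y i + s ^ 2 := by
    intro s
    rw [norm_add_sq_real, norm_smul, inner_smul_right]
    simp [EuclideanSpace.inner_single_right]
    ring
  apply one_dim_aux (fun s : ℝ => w (y + s • EuclideanSpace.single i (1:ℝ))
      + ε * ‖y + s • EuclideanSpace.single i (1:ℝ)‖ ^ 2)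
    (fun t => pderiv' i w (y + t • EuclideanSpace.single i (1:ℝ)) + ε * (2 * y i + 2 * t))
  · intro t
    simp only [hn]
    refine (pderiv_aux i w (hw.differentiable (by norm_num)) y t).add
      (HasDerivAt.const_mul ε ?_)
    have h1 := (((hasDerivAt_id t).const_mul 2).mul_const (y i)).const_add (‖y‖ ^ 2)
    have h2 := h1.add (hasDerivAt_pow 2 t)
    refine h2.congr_deriv ?_
    simp
  · have h := pderiv_aux i _ (pderiv_contDiff i w hw) y 0
    rw [zero_smul, add_zero] at h
    refine h.add ?_
    have h1 := (((hasDerivAt_id (0:ℝ)).const_mul 2).const_add (2 * y i)).const_mul ε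
    refine h1.congr_deriv ?_
    ring
  · have hc : ContinuousAt (fun s : ℝ => y + s • EuclideanSpace.single i (1:ℝ)) 0 := by
      fun_prop
    have h0 : y + (0:ℝ) • EuclideanSpace.single i (1:ℝ) = y := by simp
    have hm : IsLocalMax (fun x => w x + ε * ‖x‖ ^ 2)
      ((fun s : ℝ => y + s • EuclideanSpace.single i (1:ℝ)) 0) := by
      simpa using hmax
    exact hc.eventually hm

theorem pderiv_sub {d : ℕ} (i : Fin d) (f g : EuclideanSpace ℝ (Fin d) → ℝ)
    (hf : Differentiable ℝ f) (hg : Differentiable ℝ g) :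
    pderiv' i (fun x => f x - g x) = fun x => pderiv' i f x - pderiv' i g x := by
  funext x
  unfold pderiv'
  rw [fderiv_fun_sub (hf x) (hg x)]
  rfl

theorem le_aux (ψ φ : EuclideanSpace ℝ (Fin 3) → ℝ)
    (hψ0 : ∀ x, 0 ≤ ψ x)
    (u₁ u₂ : EuclideanSpace ℝ (Fin 3) → ℝ)
    (hu₁ : ContDiff ℝ 2 u₁) (hu₂ : ContDiff ℝ 2 u₂)
    (heq₁ : ∀ x, lap u₁ x = ψ x * (u₁ x) ^ 3 - φ x)
    (heq₂ : ∀ x, lap u₂ x = ψ x * (u₂ x) ^ 3 - φ x)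
    (C : ℝ) (hC : 0 < C)
    (hdecay₁ : ∀ x : EuclideanSpace ℝ (Fin 3), 1 ≤ ‖x‖ → |u₁ x| ≤ C / ‖x‖)
    (hdecay₂ : ∀ x : EuclideanSpace ℝ (Fin 3), 1 ≤ ‖x‖ → |u₂ x| ≤ C / ‖x‖)
    (x₀ : EuclideanSpace ℝ (Fin 3)) : u₁ x₀ ≤ u₂ x₀ := by
  by_contra hlt
  push Not at hlt
  obtain ⟨m, hm⟩ : ∃ m, m = u₁ x₀ - u₂ x₀ := ⟨_, rfl⟩
  have hm0 : 0 < m := by linarith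
  obtain ⟨R, hR⟩ : ∃ R, R = 1 + ‖x₀‖ + 8 * C / m := ⟨_, rfl⟩
  have hq : 0 < 8 * C / m := by positivity
  have hx0 := norm_nonneg x₀
  have hR1 : 1 ≤ R := by linarith
  have hRx : ‖x₀‖ ≤ R := by linarith
  have hRC : C / R ≤ m / 8 := by
    have h8 : 8 * C / m ≤ R := by linarith
    rw [div_le_iff₀ hm0] at h8
    rw [div_le_iff₀ (by linarith)]
    linarith
  obtain ⟨ε, hε⟩ : ∃ ε, ε = m / (4 * R ^ 2) := ⟨_, rfl⟩
  have hε0 : 0 < ε := by rw [hε]; positivity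
  have hεR : ε * R ^ 2 = m / 4 := by rw [hε]; field_simp
  have hw : ContDiff ℝ 2 (fun x => u₁ x - u₂ x) := hu₁.sub hu₂
  have hcont : Continuous (fun x => (u₁ x - u₂ x) + ε * ‖x‖ ^ 2) := by
    have := hw.continuous
    fun_prop
  obtain ⟨y, hyB, hy⟩ := (isCompact_closedBall (0 : EuclideanSpace ℝ (Fin 3)) R).exists_isMaxOn
    ⟨x₀, by simpa using hRx⟩ hcont.continuousOn
  have hyR : ‖y‖ ≤ R := by simpa using hyB
  have hv : (u₁ x₀ - u₂ x₀) + ε * ‖x₀‖ ^ 2 ≤ (u₁ y - u₂ y) + ε * ‖y‖ ^ 2 :=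
    hy (by simpa using hRx : x₀ ∈ Metric.closedBall (0 : EuclideanSpace ℝ (Fin 3)) R)
  have hy2 : ε * ‖y‖ ^ 2 ≤ m / 4 := by
    rw [← hεR]; gcongr
  have hx2 : 0 ≤ ε * ‖x₀‖ ^ 2 := by positivity
  have hwy : m * (3 / 4) ≤ u₁ y - u₂ y := by linarith
  have hyl : ‖y‖ < R := by
    refine lt_of_le_of_ne hyR fun h => ?_
    have h1 := hdecay₁ y (by linarith)
    have h2 := hdecay₂ y (by linarith)
    rw [h] at h1 h2
    have := (abs_le.1 h1).2
    have := (abs_le.1 h2).1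
    linarith
  have hloc : IsLocalMax (fun x => (u₁ x - u₂ x) + ε * ‖x‖ ^ 2) y :=
    hy.isLocalMax (Filter.mem_of_superset (Metric.isOpen_ball.mem_nhds (by simpa using hyl))
      Metric.ball_subset_closedBall)
  have hlap : lap (fun x => u₁ x - u₂ x) y = lap u₁ y - lap u₂ y := by
    unfold lap
    rw [← Finset.sum_sub_distrib]
    refine Finset.sum_congr rfl fun i _ => ?_
    rw [pderiv_sub i _ _ (hu₁.differentiable (by norm_num)) (hu₂.differentiable (by norm_num)),
      pderiv_sub i _ _ (pderiv_contDiff i _ hu₁) (pderiv_contDiff i _ hu₂)]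
  have hneg : lap (fun x => u₁ x - u₂ x) y < 0 := by
    unfold lap
    refine Finset.sum_neg (fun i _ => ?_) Finset.univ_nonempty
    have := max_aux i _ hw ε y hloc
    linarith
  have hcube : u₂ y ^ 3 ≤ u₁ y ^ 3 :=
    (Odd.strictMono_pow (by decide : Odd 3)).monotone (by linarith)
  have := mul_le_mul_of_nonneg_left hcube (hψ0 y)
  rw [hlap, heq₁, heq₂] at hneg
  linarith

/-- Uniqueness of decaying equilibrium solutions of `Δu = ψ u³ − φ` on `ℝ³` with `ψ ≥ 0`:
two `C²` solutions decaying like `C/|x|` at infinity coincide. -/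
theorem stmt13 (ψ φ : EuclideanSpace ℝ (Fin 3) → ℝ)
    (hψc : Continuous ψ) (hψ0 : ∀ x, 0 ≤ ψ x) (hφc : Continuous φ)
    (u₁ u₂ : EuclideanSpace ℝ (Fin 3) → ℝ)
    (hu₁ : ContDiff ℝ 2 u₁) (hu₂ : ContDiff ℝ 2 u₂)
    (heq₁ : ∀ x, lap u₁ x = ψ x * (u₁ x) ^ 3 - φ x)
    (heq₂ : ∀ x, lap u₂ x = ψ x * (u₂ x) ^ 3 - φ x)
    (C : ℝ) (hC : 0 < C)
    (hdecay₁ : ∀ x : EuclideanSpace ℝ (Fin 3), 1 ≤ ‖x‖ → |u₁ x| ≤ C / ‖x‖)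
    (hdecay₂ : ∀ x : EuclideanSpace ℝ (Fin 3), 1 ≤ ‖x‖ → |u₂ x| ≤ C / ‖x‖) :
    u₁ = u₂ := by
  funext x
  exact le_antisymm
    (le_aux ψ φ hψ0 u₁ u₂ hu₁ hu₂ heq₁ heq₂ C hC hdecay₁ hdecay₂ x)
    (le_aux ψ φ hψ0 u₂ u₁ hu₂ hu₁ heq₂ heq₁ C hC hdecay₂ hdecay₁ x)
end

section
/- Let ψ : ℝ³ → ℝ be continuous with ψ ≥ 0, and let u, g ∈ C²(ℝ³) satisfy Δ(u + g) = ψ u³ on all of ℝ³. Suppose there exists a constant C > 0 such that |u(x)| ≤ C/|x| and |g(x)| ≤ C/|x| for all |x| ≥ 1. Then sup_{x ∈ ℝ³} |u(x)| ≤ 2 · sup_{x ∈ ℝ³} |g(x)|. -/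
lemma one_dim (h h' : ℝ → ℝ) (h'' ε a b : ℝ) (H1 : ∀ t, HasDerivAt h (h' t) t)
    (H2 : HasDerivAt h' h'' 0)
    (hm : IsLocalMax (fun t => h t + ε * (a + b * t + t ^ 2)) 0) : h'' + 2 * ε ≤ 0 := by
  by_contra! hcon
  set f : ℝ → ℝ := fun t => h t + ε * (a + b * t + t ^ 2) with hf
  have D1 : ∀ t, HasDerivAt f (h' t + ε * (b + 2 * t)) t := by
    intro t
    have e1 : HasDerivAt (fun t : ℝ => a + b * t + t ^ 2) (b + 2 * t) t := by
      have := (((hasDerivAt_id t).const_mul b).const_add a).add (hasDerivAt_pow 2 t)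
      exact this.congr_deriv (by norm_num)
    exact (H1 t).add (e1.const_mul ε)
  have D1' : deriv f = fun t => h' t + ε * (b + 2 * t) := funext fun t => (D1 t).deriv
  have D2 : HasDerivAt (deriv f) (h'' + 2 * ε) 0 := by
    rw [D1']
    have e1 : HasDerivAt (fun t : ℝ => b + 2 * t) 2 0 := by
      have := (((hasDerivAt_id (0:ℝ)).const_mul 2).const_add b)
      exact this.congr_deriv (by norm_num)
    have := H2.add (e1.const_mul ε)
    exact this.congr_deriv (by ring)
  have hmin : IsLocalMin f 0 := isLocalMin_of_deriv_deriv_pos (by rw [D2.deriv]; exact hcon)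
    hm.deriv_eq_zero (D1 0).continuousAt
  have hc : f =ᶠ[nhds 0] fun _ => f 0 := by
    filter_upwards [hm, hmin] with t h1 h2
    exact le_antisymm h1 h2
  have h3 := hc.deriv.deriv_eq
  rw [D2.deriv] at h3
  simp at h3
  linarith

lemma max_principle (w : EuclideanSpace ℝ (Fin 3) → ℝ) (hw : ContDiff ℝ 2 w) (M C : ℝ)
    (hM : 0 ≤ M) (hlap : ∀ x, M < w x → 0 ≤ lap w x)
    (hdec : ∀ x : EuclideanSpace ℝ (Fin 3), 1 ≤ ‖x‖ → w x ≤ C / ‖x‖) (x1) : w x1 ≤ M := by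
  by_contra! hcon
  obtain ⟨δ, hδ, hδ1⟩ : ∃ δ, 0 < δ ∧ M + 2 * δ = w x1 := ⟨(w x1 - M) / 2, by linarith, by ring⟩
  obtain ⟨R, hR1, hRC⟩ : ∃ R : ℝ, 1 ≤ R ∧ C < δ * R := by
    refine ⟨max 1 (C / δ + 1), le_max_left _ _, ?_⟩
    have : C / δ + 1 ≤ max 1 (C / δ + 1) := le_max_right _ _
    calc C < δ * (C / δ + 1) := by field_simp; linarith
      _ ≤ _ := by gcongr
  have hball : ∀ x, M + δ ≤ w x → ‖x‖ ≤ R := by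
    intro x hx
    by_contra! hxR
    have h1 := hdec x (by linarith)
    have h2 : C / ‖x‖ < δ := by
      rw [div_lt_iff₀ (by linarith)]
      nlinarith
    linarith
  set K : Set (EuclideanSpace ℝ (Fin 3)) := {x | M + δ ≤ w x}
  have hKc : IsCompact K := by
    refine (isCompact_closedBall (0 : EuclideanSpace ℝ (Fin 3)) R).of_isClosed_subset
      (isClosed_le continuous_const hw.continuous) ?_
    intro x hx
    simpa using hball x hx
  obtain ⟨ε, hε, hεR⟩ : ∃ ε : ℝ, 0 < ε ∧ ε * R ^ 2 < δ := by
    refine ⟨δ / (2 * R ^ 2), by positivity, ?_⟩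
    field_simp
    linarith
  have hx1K : x1 ∈ K := by show M + δ ≤ w x1; linarith
  obtain ⟨x0, hx0K, hx0⟩ := hKc.exists_isMaxOn ⟨x1, hx1K⟩
    (f := fun x => w x + ε * ‖x‖ ^ 2) (by have := hw.continuous; fun_prop)
  have hx0R := hball x0 hx0K
  have hlt : M + δ < w x0 := by
    have h1 : w x1 + ε * ‖x1‖ ^ 2 ≤ w x0 + ε * ‖x0‖ ^ 2 := hx0 hx1K
    have h2 : ε * ‖x0‖ ^ 2 ≤ ε * R ^ 2 := by gcongr
    have h3 : 0 ≤ ε * ‖x1‖ ^ 2 := by positivity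
    linarith
  have hloc : IsLocalMax (fun x => w x + ε * ‖x‖ ^ 2) x0 := by
    filter_upwards [hw.continuous.continuousAt.eventually (lt_mem_nhds hlt)] with x hx
    exact hx0 (le_of_lt hx)
  have key : ∀ i, pderiv' i (pderiv' i w) x0 + 2 * ε ≤ 0 := by
    intro i
    set e : EuclideanSpace ℝ (Fin 3) := EuclideanSpace.single i 1 with he
    have hline : ∀ t : ℝ, HasDerivAt (fun t : ℝ => x0 + t • e) e t := by
      intro t
      simpa using ((hasDerivAt_id t).smul_const e).const_add x0
    have hwd : Differentiable ℝ w := hw.differentiable (by norm_num)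
    have hpd : Differentiable ℝ (pderiv' i w) := by
      have h1 : ContDiff ℝ 1 (fderiv ℝ w) := hw.fderiv_right (by norm_num)
      have h2 : Differentiable ℝ (fderiv ℝ w) := h1.differentiable (by norm_num)
      unfold pderiv'
      fun_prop
    refine one_dim (fun t => w (x0 + t • e)) (fun t => pderiv' i w (x0 + t • e)) _ ε
      (‖x0‖ ^ 2) (2 * inner ℝ x0 e) ?_ ?_ ?_
    · intro t
      exact (hwd (x0 + t • e)).hasFDerivAt.comp_hasDerivAt t (hline t)
    · have h0 : HasFDerivAt (pderiv' i w) (fderiv ℝ (pderiv' i w) x0) (x0 + (0:ℝ) • e) := by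
        simpa using (hpd x0).hasFDerivAt
      exact h0.comp_hasDerivAt 0 (hline 0)
    · have h1 : Filter.Tendsto (fun t : ℝ => x0 + t • e) (nhds 0) (nhds x0) := by
        have := (hline 0).continuousAt.tendsto
        simpa using this
      filter_upwards [h1.eventually hloc] with t ht
      have hn : ‖x0 + t • e‖ ^ 2 = ‖x0‖ ^ 2 + 2 * inner ℝ x0 e * t + t ^ 2 := by
        rw [norm_add_sq_real, inner_smul_right, norm_smul]
        have : ‖e‖ = 1 := by simp [he]
        rw [this, mul_one, Real.norm_eq_abs, sq_abs]
        ring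
      rw [hn] at ht
      simpa using ht
  have hl := hlap x0 (by linarith)
  have k0 := key 0
  have k1 := key 1
  have k2 := key 2
  simp only [lap, Fin.sum_univ_three] at hl
  linarith

lemma half (ψ : EuclideanSpace ℝ (Fin 3) → ℝ) (hψ0 : ∀ x, 0 ≤ ψ x)
    (u g : EuclideanSpace ℝ (Fin 3) → ℝ)
    (hu : ContDiff ℝ 2 u) (hg : ContDiff ℝ 2 g)
    (heq : ∀ x, lap (fun y => u y + g y) x = ψ x * (u x) ^ 3)
    (C M : ℝ) (hM : ∀ x, |g x| ≤ M)
    (hudecay : ∀ x : EuclideanSpace ℝ (Fin 3), 1 ≤ ‖x‖ → |u x| ≤ C / ‖x‖)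
    (hgdecay : ∀ x : EuclideanSpace ℝ (Fin 3), 1 ≤ ‖x‖ → |g x| ≤ C / ‖x‖) (x) :
    u x + g x ≤ M := by
  refine max_principle (fun y => u y + g y) (hu.add hg) M (2 * C)
    ((abs_nonneg _).trans (hM 0)) ?_ ?_ x
  · intro y hy
    rw [heq]
    have : 0 ≤ u y := by
      have := (le_abs_self _).trans (hM y)
      linarith
    have := hψ0 y
    positivity
  · intro y hy
    have h1 := (le_abs_self _).trans (hudecay y hy)
    have h2 := (le_abs_self _).trans (hgdecay y hy)
    rw [two_mul, add_div]
    exact add_le_add h1 h2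

lemma lap_neg' (f : EuclideanSpace ℝ (Fin 3) → ℝ) (x) : lap (fun y => - f y) x = - lap f x := by
  have h : ∀ i (f : EuclideanSpace ℝ (Fin 3) → ℝ),
      pderiv' i (fun y => - f y) = fun y => - pderiv' i f y := by
    intro i f
    funext y
    simp [pderiv', fderiv_fun_neg]
  simp [lap, h]

/-- If `Δ(u + g) = ψ u³` on `ℝ³` with `ψ ≥ 0` and `u`, `g` decay like `C/|x|` at infinity,
then `sup |u| ≤ 2 sup |g|`. -/
theorem stmt14 (ψ : EuclideanSpace ℝ (Fin 3) → ℝ)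
    (hψc : Continuous ψ) (hψ0 : ∀ x, 0 ≤ ψ x)
    (u g : EuclideanSpace ℝ (Fin 3) → ℝ)
    (hu : ContDiff ℝ 2 u) (hg : ContDiff ℝ 2 g)
    (heq : ∀ x, lap (fun y => u y + g y) x = ψ x * (u x) ^ 3)
    (C : ℝ) (hC : 0 < C)
    (hudecay : ∀ x : EuclideanSpace ℝ (Fin 3), 1 ≤ ‖x‖ → |u x| ≤ C / ‖x‖)
    (hgdecay : ∀ x : EuclideanSpace ℝ (Fin 3), 1 ≤ ‖x‖ → |g x| ≤ C / ‖x‖) :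
    (⨆ x : EuclideanSpace ℝ (Fin 3), |u x|) ≤ 2 * ⨆ x : EuclideanSpace ℝ (Fin 3), |g x| := by
  have hbd : BddAbove (Set.range fun x => |g x|) := by
    obtain ⟨B, hB⟩ := (isCompact_closedBall (0 : EuclideanSpace ℝ (Fin 3)) 1).exists_bound_of_continuousOn
      hg.continuous.continuousOn
    refine ⟨max B C, ?_⟩
    rintro _ ⟨x, rfl⟩
    by_cases hx : ‖x‖ ≤ 1
    · exact (hB x (by simpa using hx)).trans (le_max_left _ _)
    · push Not at hx
      exact ((hgdecay x hx.le).trans (div_le_self hC.le hx.le)).trans (le_max_right _ _)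
  have hM : ∀ x, |g x| ≤ ⨆ x : EuclideanSpace ℝ (Fin 3), |g x| := fun x => le_ciSup hbd x
  have hA := half ψ hψ0 u g hu hg heq C _ hM hudecay hgdecay
  have hB := half ψ hψ0 (fun x => - u x) (fun x => - g x) hu.neg hg.neg
    (by
      intro x
      have : (fun y => - u y + - g y) = fun y => - (u y + g y) := by funext y; ring
      rw [this, lap_neg', heq]
      ring) C _ (by simpa using hM) (by simpa using hudecay) (by simpa using hgdecay)
  refine ciSup_le fun x => ?_
  have h1 := hA x
  have h2 := hB x
  have h3 := abs_le.1 (hM x)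
  rw [abs_le]
  constructor <;> linarith [h3.1, h3.2]
end
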